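/- Let (κ, k) be a pair of Sonine kernels from S_{−1} and let n ∈ ℕ, n ≥ 1. Define κ_n(t) = ({1}^{n−1} * κ)(t), the convolution of κ with the (n−1)-fold convolution power of the constant function 1, and k_n = k. Then κ_n ∈ C_{−1}(0,∞), k_n ∈ C_{−1,0}(0,∞), and (κ_n * k_n)(t) = t^{n−1}/(n−1)! for all t > 0; that is, the pair (κ_n, k_n) belongs to the set L_n. -/

import Mathlib

open Real MeasureTheory Set Filter Topology

/-- The Laplace convolution `(f * g)(t) = ∫₀ᵗ f(t-τ) g(τ) dτ`. -/
noncomputable def lconv (f g : ℝ → ℝ) : ℝ → ℝ :=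
  fun t => ∫ τ in (0:ℝ)..t, f (t - τ) * g τ

/-- The space `C_{-1}(0,∞)`: functions of the form `t^p f₁(t)` with `p > -1`
and `f₁` continuous on `[0,∞)`. -/
def Cm1 (f : ℝ → ℝ) : Prop :=
  ∃ p : ℝ, -1 < p ∧ ∃ f₁ : ℝ → ℝ, ContinuousOn f₁ (Set.Ici 0) ∧
    ∀ t : ℝ, 0 < t → f t = t ^ p * f₁ t

/-- The subspace `C_{-1,0}(0,∞)`: functions of the form `t^p f₁(t)` with `-1 < p < 0`
and `f₁` continuous on `[0,∞)`. -/
def Cm10 (f : ℝ → ℝ) : Prop :=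
  ∃ p : ℝ, -1 < p ∧ p < 0 ∧ ∃ f₁ : ℝ → ℝ, ContinuousOn f₁ (Set.Ici 0) ∧
    ∀ t : ℝ, 0 < t → f t = t ^ p * f₁ t

/-- Convolution with the `m`-fold convolution power of the constant function `{1}`:
`onesConv 0 κ = κ` (i.e. `{1}^0 * κ = κ`) and `onesConv (m+1) κ = {1} * (onesConv m κ)`. -/
noncomputable def onesConv : ℕ → (ℝ → ℝ) → ℝ → ℝ
  | 0, κ => κ
  | m + 1, κ => lconv (fun _ => 1) (onesConv m κ)

/-!
Laplace convolution is associative, as ordinary convolution of functions truncated to `(0, t]`, so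
`κ_n * k = {1}^{n-1} * (κ * k) = {1}^{n-1} * {1} = {1}^n`. Membership in `C_{-1}` holds because
convolution with `{1}` is integration from `0`, which turns a function integrable up to `0` into
one continuous on `[0, ∞)`.
-/

section Convolution

open Function ContinuousLinearMap
open scoped Convolution ENNReal

variable {f f' g g' h : ℝ → ℝ} {t : ℝ}

theorem lconv_congr (ht : 0 ≤ t) (hf : EqOn f f' (Ioo 0 t)) (hg : EqOn g g' (Ioo 0 t)) :
    lconv f g t = lconv f' g' t := by
  refine intervalIntegral.integral_congr_Ioo_of_le ht fun τ hτ => ?_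
  have hτ' : t - τ ∈ Ioo 0 t := ⟨sub_pos.2 hτ.2, sub_lt_self t hτ.1⟩
  simp only [hf hτ', hg hτ]

theorem lconv_eq_zero_of_nonpos (hg : support g ⊆ Ioi 0) (ht : t ≤ 0) : lconv f g t = 0 := by
  refine intervalIntegral.integral_zero_ae (ae_of_all _ fun τ hτ => ?_)
  rw [uIoc_of_ge ht] at hτ
  rw [notMem_support.1 fun h => (hg h).not_ge hτ.2, mul_zero]

theorem support_lconv_subset (hg : support g ⊆ Ioi 0) : support (lconv f g) ⊆ Ioi 0 :=
  fun _ hx => not_le.1 fun hx' => hx (lconv_eq_zero_of_nonpos hg hx')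

theorem lconv_eq_convolution (hf : support f ⊆ Ioi 0) (hg : support g ⊆ Ioi 0) :
    lconv f g = f ⋆[mul ℝ ℝ] g := by
  have hpos := posConvolution_eq_convolution_indicator f g (mul ℝ ℝ)
  rw [indicator_eq_self.2 hf, indicator_eq_self.2 hg] at hpos
  rw [← hpos]
  funext x
  rcases le_or_gt x 0 with hx | hx
  · rw [lconv_eq_zero_of_nonpos hg hx, posConvolution, indicator_of_notMem (notMem_Ioi.2 hx)]
  · rw [posConvolution, indicator_of_mem (mem_Ioi.2 hx), lconv]
    simpa using intervalIntegral.integral_comp_sub_left (a := 0) (b := x)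
      (fun τ => f τ * g (x - τ)) x

theorem convolution_mul_assoc {G : Type*} [AddCommGroup G] [MeasurableSpace G] [MeasurableAdd₂ G]
    [MeasurableNeg G] {μ : Measure G} [SFinite μ] [μ.IsAddLeftInvariant] [μ.IsNegInvariant]
    {f g h : G → ℝ} (hf_top : MemLp f ∞ μ) (hf : Integrable f μ) (hg : Integrable g μ)
    (hh : Integrable h μ) :
    (f ⋆[mul ℝ ℝ, μ] g) ⋆[mul ℝ ℝ, μ] h = f ⋆[mul ℝ ℝ, μ] (g ⋆[mul ℝ ℝ, μ] h) := by
  funext x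
  refine convolution_assoc _ _ _ _ (fun a b c => mul_assoc a b c) hf.1 hg.1 hh.1
    (hf.ae_convolution_exists _ hg) (hg.norm.ae_convolution_exists _ hh.norm) ?_
  exact ((hg.norm.integrable_convolution (mul ℝ ℝ) hh.norm).comp_sub_left x).mul_of_top_right
    hf_top.norm

theorem lconv_assoc (ht : 0 ≤ t) (hf : MemLp f ∞ (volume.restrict (Ioc 0 t)))
    (hg : IntervalIntegrable g volume 0 t) (hh : IntervalIntegrable h volume 0 t) :
    lconv (lconv f g) h t = lconv f (lconv g h) t := by
  let trunc (φ : ℝ → ℝ) : ℝ → ℝ := (Ioc 0 t).indicator φ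
  have trunc_eqOn (φ : ℝ → ℝ) : EqOn φ (trunc φ) (Ioo 0 t) := fun x hx =>
    (indicator_of_mem (Ioo_subset_Ioc_self hx) φ).symm
  have support_trunc (φ : ℝ → ℝ) : support (trunc φ) ⊆ Ioi 0 :=
    support_indicator_subset.trans Ioc_subset_Ioi_self
  have integrable_trunc {φ : ℝ → ℝ} (hφ : IntegrableOn φ (Ioc 0 t)) : Integrable (trunc φ) :=
    hφ.integrable_indicator measurableSet_Ioc
  have lconv_trunc_eqOn (φ ψ : ℝ → ℝ) :
      EqOn (lconv φ ψ) (lconv (trunc φ) (trunc ψ)) (Ioo 0 t) := fun x hx =>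
    lconv_congr hx.1.le ((trunc_eqOn φ).mono (Ioo_subset_Ioo_right hx.2.le))
      ((trunc_eqOn ψ).mono (Ioo_subset_Ioo_right hx.2.le))
  rw [lconv_congr ht (lconv_trunc_eqOn f g) (trunc_eqOn h),
    lconv_congr ht (trunc_eqOn f) (lconv_trunc_eqOn g h),
    lconv_eq_convolution (support_lconv_subset (support_trunc g)) (support_trunc h),
    lconv_eq_convolution (support_trunc f) (support_trunc g),
    lconv_eq_convolution (support_trunc f) (support_lconv_subset (support_trunc h)),
    lconv_eq_convolution (support_trunc g) (support_trunc h)]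
  exact congrFun (convolution_mul_assoc ((memLp_indicator_iff_restrict measurableSet_Ioc).2 hf)
    (integrable_trunc (hf.integrable le_top)) (integrable_trunc hg.1) (integrable_trunc hh.1)) t

end Convolution

section Ones

variable {f g : ℝ → ℝ} {t : ℝ}

theorem lconv_one_left (f : ℝ → ℝ) : lconv (fun _ => 1) f = fun t => ∫ τ in (0:ℝ)..t, f τ := by
  funext t
  simp only [lconv, one_mul]

theorem continuousOn_lconv_one (hf : IntervalIntegrable f volume 0 t) :
    ContinuousOn (lconv (fun _ => 1) f) (uIcc 0 t) := by
  rw [lconv_one_left]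
  exact intervalIntegral.continuousOn_primitive_interval' hf left_mem_uIcc

theorem intervalIntegrable_onesConv (m : ℕ) (hf : IntervalIntegrable f volume 0 t) :
    IntervalIntegrable (onesConv m f) volume 0 t := by
  induction m with
  | zero => exact hf
  | succ m ih => exact (continuousOn_lconv_one ih).intervalIntegrable

theorem onesConv_congr (m : ℕ) (hfg : EqOn f g (Ioc 0 t)) :
    EqOn (onesConv m f) (onesConv m g) (Ioc 0 t) := by
  induction m with
  | zero => exact hfg
  | succ m ih =>
    exact fun x hx => lconv_congr hx.1.le (eqOn_refl _ _)
      (ih.mono (Ioo_subset_Ioc_self.trans (Ioc_subset_Ioc_right hx.2)))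

theorem onesConv_one (m : ℕ) (t : ℝ) : onesConv m (fun _ => 1) t = t ^ m / m.factorial := by
  induction m generalizing t with
  | zero => simp [onesConv]
  | succ m ih =>
    rw [onesConv, lconv_one_left]
    simp only [ih, intervalIntegral.integral_div, integral_pow, Nat.factorial_succ, Nat.cast_mul,
      Nat.cast_succ, ne_eq, Nat.succ_ne_zero, not_false_eq_true, zero_pow, sub_zero, div_div]

theorem lconv_onesConv (m : ℕ) (ht : 0 ≤ t) (hf : IntervalIntegrable f volume 0 t)
    (hg : IntervalIntegrable g volume 0 t) :
    lconv (onesConv m f) g t = onesConv m (lconv f g) t := by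
  induction m generalizing t with
  | zero => rfl
  | succ m ih =>
    calc lconv (lconv (fun _ => 1) (onesConv m f)) g t
        = lconv (fun _ => 1) (lconv (onesConv m f) g) t :=
          lconv_assoc ht (memLp_const 1) (intervalIntegrable_onesConv m hf) hg
      _ = lconv (fun _ => 1) (onesConv m (lconv f g)) t := by
          refine lconv_congr ht (eqOn_refl _ _) fun x hx => ?_
          have hsub : uIcc 0 x ⊆ uIcc 0 t :=
            uIcc_subset_uIcc_left (mem_uIcc_of_le hx.1.le hx.2.le)
          exact ih hx.1.le (hf.mono_set hsub) (hg.mono_set hsub)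

end Ones

theorem Cm10.cm1 {f : ℝ → ℝ} : Cm10 f → Cm1 f :=
  fun ⟨p, hp, _, hf⟩ => ⟨p, hp, hf⟩

theorem Cm1.intervalIntegrable {f : ℝ → ℝ} (hf : Cm1 f) {t : ℝ} (ht : 0 ≤ t) :
    IntervalIntegrable f volume 0 t := by
  obtain ⟨p, hp, f₁, hf₁, hf⟩ := hf
  have hprod : IntervalIntegrable (fun x : ℝ => x ^ p * f₁ x) volume 0 t := by
    refine (intervalIntegral.intervalIntegrable_rpow' hp).mul_continuousOn (hf₁.mono ?_)
    rw [uIcc_of_le ht]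
    exact Icc_subset_Ici_self
  refine hprod.congr fun x hx => ?_
  rw [uIoc_of_le ht] at hx
  exact (hf x hx.1).symm

theorem cm1_of_continuousOn {f : ℝ → ℝ} (hf : ContinuousOn f (Ici 0)) : Cm1 f :=
  ⟨0, neg_one_lt_zero, f, hf, fun t _ => by rw [rpow_zero, one_mul]⟩

theorem cm1_lconv_one {f : ℝ → ℝ} (hf : ∀ t, 0 < t → IntervalIntegrable f volume 0 t) :
    Cm1 (lconv (fun _ => 1) f) := by
  refine cm1_of_continuousOn fun t (ht : 0 ≤ t) => ?_
  have ht₁ : t < t + 1 := lt_add_one t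
  have hcont : ContinuousOn (lconv (fun _ => 1) f) (Icc 0 (t + 1)) := by
    rw [← uIcc_of_le (ht.trans ht₁.le)]
    exact continuousOn_lconv_one (hf (t + 1) (ht.trans_lt ht₁))
  exact (hcont t ⟨ht, ht₁.le⟩).mono_of_mem_nhdsWithin
    (inter_mem_nhdsWithin (Ici 0) (Iic_mem_nhds ht₁))

theorem Cm1.onesConv {f : ℝ → ℝ} (hf : Cm1 f) (m : ℕ) : Cm1 (onesConv m f) := by
  cases m with
  | zero => exact hf
  | succ m => exact cm1_lconv_one fun _ ht =>
      intervalIntegrable_onesConv m (hf.intervalIntegrable ht.le)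

theorem statement10_general {κ k : ℝ → ℝ} (hκ : Cm1 κ)
    (hk : ∀ t, 0 < t → IntervalIntegrable k volume 0 t)
    (hSonine : ∀ t, 0 < t → lconv κ k t = 1) (m : ℕ) :
    Cm1 (onesConv m κ) ∧
      ∀ t, 0 < t → lconv (onesConv m κ) k t = t ^ m / m.factorial := by
  refine ⟨hκ.onesConv m, fun t ht => ?_⟩
  calc lconv (onesConv m κ) k t
      = onesConv m (lconv κ k) t :=
        lconv_onesConv m ht.le (hκ.intervalIntegrable ht.le) (hk t ht)
    _ = onesConv m (fun _ => 1) t :=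
        onesConv_congr m (fun x hx => hSonine x hx.1) (right_mem_Ioc.2 ht)
    _ = t ^ m / m.factorial := onesConv_one m t

/-- For a Sonine pair `(κ, k)` from `S_{-1}` and `n ≥ 1`, the kernels
`κ_n = {1}^{n-1} * κ` and `k_n = k` satisfy `κ_n ∈ C_{-1}(0,∞)`, `k_n ∈ C_{-1,0}(0,∞)` and
`(κ_n * k_n)(t) = t^{n-1}/(n-1)!` for `t > 0`; i.e. `(κ_n, k_n)` belongs to `L_n`. -/
theorem statement10 (κ k : ℝ → ℝ) (hκ : Cm10 κ) (hk : Cm10 k)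
    (hSonine : ∀ t : ℝ, 0 < t → lconv κ k t = 1)
    (n : ℕ) (hn : 1 ≤ n) :
    Cm1 (onesConv (n - 1) κ) ∧ Cm10 k ∧
      ∀ t : ℝ, 0 < t →
        lconv (onesConv (n - 1) κ) k t = t ^ (n - 1) / (n - 1).factorial := by
  obtain ⟨hκn, hconv⟩ :=
    statement10_general hκ.cm1 (fun t ht => hk.cm1.intervalIntegrable ht.le) hSonine (n - 1)
  exact ⟨hκn, hk, hconv⟩
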